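/- Under the stated hypotheses, if W is nonempty, then for all s₁, s₂ ∈ [0,1] with s₁ < s₂ and r·f(s₂) ≤ 1, one has g(s₁) < g(s₂), where g(s) = Σ_{i ∈ W} p(i)·d(s, s_l(i))·f(s)·σ(c(i) − f(s)·r); that is, the winner-side contribution to the per-sample influence is strictly increasing in the sample's score on the region where r·f(s) ≤ 1. -/

import Mathlib

/-- The logistic (sigmoid) function `σ(t) = (1 + exp (−t))⁻¹`. -/
noncomputable def logistic (t : ℝ) : ℝ := (1 + Real.exp (-t))⁻¹

/-! The derivative of `t ↦ t σ(c - t r)` is `σ(u) (1 - r t (1 - σ(u)))` with `u = c - t r`. Since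
`0 < 1 - σ(u) < 1`, it is positive as soon as `r t ≤ 1`. Composing with `f` and multiplying by a
nonnegative strictly increasing weight makes each summand strictly increasing in the score. -/

theorem logistic_eq_sigmoid : logistic = Real.sigmoid := rfl

theorem hasDerivAt_mul_sigmoid_sub_mul (c r t : ℝ) :
    HasDerivAt (fun t ↦ t * Real.sigmoid (c - t * r))
      (Real.sigmoid (c - t * r) * (1 - r * t * (1 - Real.sigmoid (c - t * r)))) t := by
  have hinner : HasDerivAt (fun t ↦ c - t * r) (-r) t := (hasDerivAt_mul_const r).const_sub c
  have houter := (Real.hasDerivAt_sigmoid (c - t * r)).comp t hinner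
  refine ((hasDerivAt_id' t).fun_mul houter).congr_deriv ?_
  rw [Function.comp_apply]
  ring

theorem mul_one_sub_sigmoid_lt_one {x : ℝ} (hx : x ≤ 1) (u : ℝ) :
    x * (1 - Real.sigmoid u) < 1 :=
  calc x * (1 - Real.sigmoid u)
      ≤ 1 * (1 - Real.sigmoid u) := by gcongr; exact sub_nonneg.2 (Real.sigmoid_le_one u)
    _ < 1 := by linarith [Real.sigmoid_pos u]

theorem convex_setOf_mul_le_one (r : ℝ) : Convex ℝ {t : ℝ | r * t ≤ 1} :=
  convex_halfSpace_le (IsLinearMap.isLinearMap_smul r) 1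

theorem strictMonoOn_mul_sigmoid_sub_mul (c r : ℝ) :
    StrictMonoOn (fun t ↦ t * Real.sigmoid (c - t * r)) {t | r * t ≤ 1} := by
  have hderiv := hasDerivAt_mul_sigmoid_sub_mul c r
  refine strictMonoOn_of_deriv_pos (convex_setOf_mul_le_one r)
    (fun t _ ↦ (hderiv t).continuousAt.continuousWithinAt) fun t ht ↦ ?_
  have hrt : t ∈ {t | r * t ≤ 1} := interior_subset ht
  rw [(hderiv t).deriv]
  exact mul_pos (Real.sigmoid_pos _) (sub_pos.2 (mul_one_sub_sigmoid_lt_one hrt _))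

theorem strictMonoOn_mul_mul_sigmoid {α : Type*} [Preorder α] {S : Set α} {w f : α → ℝ}
    (hw : StrictMonoOn w S) (hw_nonneg : ∀ s ∈ S, 0 ≤ w s)
    (hf : MonotoneOn f S) (hf_pos : ∀ s ∈ S, 0 < f s) (c r : ℝ) :
    StrictMonoOn (fun s ↦ w s * (f s * Real.sigmoid (c - f s * r))) {s ∈ S | r * f s ≤ 1} := by
  rintro s₁ ⟨hs₁, hr₁⟩ s₂ ⟨hs₂, hr₂⟩ hlt
  exact mul_lt_mul (hw hs₁ hs₂ hlt)
    ((strictMonoOn_mul_sigmoid_sub_mul c r).monotoneOn hr₁ hr₂ (hf hs₁ hs₂ hlt.le))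
    (mul_pos (hf_pos s₁ hs₁) (Real.sigmoid_pos _)) (hw_nonneg s₂ hs₂)

theorem stmt_5_general {α β ι : Type*} [Preorder α] (S : Set α) (r : ℝ) (f : α → ℝ)
    (d : α → β → ℝ) (hf_mono : MonotoneOn f S) (hf_pos : ∀ s ∈ S, 0 < f s)
    (W : Finset ι) (hW : W.Nonempty) (sl : ι → β)
    (hd_mono : ∀ i ∈ W, StrictMonoOn (d · (sl i)) S)
    (hd_nonneg : ∀ i ∈ W, ∀ s ∈ S, 0 ≤ d s (sl i))
    (c : ι → ℝ) (p : ι → ℝ) (hp : ∀ i ∈ W, 0 < p i) :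
    StrictMonoOn (fun s ↦ ∑ i ∈ W, p i * d s (sl i) * f s * logistic (c i - f s * r))
      {s ∈ S | r * f s ≤ 1} := by
  intro s₁ hs₁ s₂ hs₂ hlt
  refine Finset.sum_lt_sum_of_nonempty hW fun i hi ↦ ?_
  have hterm := strictMonoOn_mul_mul_sigmoid (hd_mono i hi) (hd_nonneg i hi) hf_mono hf_pos
    (c i) r hs₁ hs₂ hlt
  simpa only [mul_assoc, logistic_eq_sigmoid] using mul_lt_mul_of_pos_left hterm (hp i hi)

/-- Winner-side contribution to the per-sample influence is strictly increasing in the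
sample's score on the region where `r·f(s) ≤ 1`. Here `W` is a nonempty finite index set
of preference pairs in which `z` is the winner, with loser scores `sl`, loser implicit
rewards `c`, and strictly positive base weights `p`; `f` is strictly increasing and
strictly positive on `[0,1]`, and `d` is strictly monotonically increasing with respect
to `x − y` with `0 ≤ d ≤ 1` on `[0,1]²`. -/
theorem stmt_5 {ι : Type*} (r : ℝ) (f : ℝ → ℝ) (d : ℝ → ℝ → ℝ)
    (hf_mono : StrictMonoOn f (Set.Icc (0:ℝ) 1))
    (hf_pos : ∀ s ∈ Set.Icc (0:ℝ) 1, 0 < f s)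
    (hd_mono : ∀ x ∈ Set.Icc (0:ℝ) 1, ∀ y ∈ Set.Icc (0:ℝ) 1,
      ∀ x' ∈ Set.Icc (0:ℝ) 1, ∀ y' ∈ Set.Icc (0:ℝ) 1,
        x - y < x' - y' → d x y < d x' y')
    (hd_range : ∀ x ∈ Set.Icc (0:ℝ) 1, ∀ y ∈ Set.Icc (0:ℝ) 1,
      d x y ∈ Set.Icc (0:ℝ) 1)
    (W : Finset ι) (hW : W.Nonempty)
    (sl : ι → ℝ) (hsl : ∀ i ∈ W, sl i ∈ Set.Icc (0:ℝ) 1)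
    (c : ι → ℝ) (p : ι → ℝ) (hp : ∀ i ∈ W, 0 < p i)
    (s₁ s₂ : ℝ) (hs₁ : s₁ ∈ Set.Icc (0:ℝ) 1) (hs₂ : s₂ ∈ Set.Icc (0:ℝ) 1)
    (hlt : s₁ < s₂) (hr : r * f s₂ ≤ 1) :
    ∑ i ∈ W, p i * d s₁ (sl i) * f s₁ * logistic (c i - f s₁ * r)
      < ∑ i ∈ W, p i * d s₂ (sl i) * f s₂ * logistic (c i - f s₂ * r) := by
  have hr₁ : r * f s₁ ≤ 1 := (convex_setOf_mul_le_one r).ordConnected.out (by simp) hr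
    ⟨(hf_pos s₁ hs₁).le, hf_mono.monotoneOn hs₁ hs₂ hlt.le⟩
  exact stmt_5_general (Set.Icc 0 1) r f d hf_mono.monotoneOn hf_pos W hW sl
    (fun i hi x hx y hy hxy ↦ hd_mono x hx _ (hsl i hi) y hy _ (hsl i hi) (sub_lt_sub_right hxy _))
    (fun i hi s hs ↦ (hd_range s hs _ (hsl i hi)).1) c p hp ⟨hs₁, hr₁⟩ ⟨hs₂, hr⟩ hlt
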